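/- arXiv:1510.00092 — 2 statements merged into one kernel-verified Lean document; each statement's English description precedes it below -/
import Mathlib

section
/- There is no injective group homomorphism from G into the symmetric group S₄ (Equiv.Perm (Fin 4)), and there is no injective group homomorphism from G into the alternating group A₅ (alternatingGroup (Fin 5)). -/
/-- The coordinate permutation τ = (0 4 1 3) on six letters. -/
def τ6 : Equiv.Perm (Fin 6) := c[0, 4, 1, 3]

/-- The coordinate permutation h = (2 0 4 3 1) on six letters. -/
def h6 : Equiv.Perm (Fin 6) := c[2, 0, 4, 3, 1]

/-- The subgroup G = ⟨τ, h⟩ of S₆, isomorphic to GA(1,5). -/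
def G6 : Subgroup (Equiv.Perm (Fin 6)) := Subgroup.closure {τ6, h6}

theorem perm4_aux : ∀ x : Equiv.Perm (Fin 4), x ^ 5 = 1 → x = 1 := by
  decide +kernel

theorem perm5_aux : ∀ x : Equiv.Perm (Fin 5), Equiv.Perm.sign x = 1 → x ^ 4 = 1 → x ^ 2 = 1 := by
  decide +kernel

theorem h6_pow : h6 ^ 5 = 1 := by decide +kernel

theorem h6_ne : h6 ≠ 1 := by decide +kernel

theorem τ6_pow : τ6 ^ 4 = 1 := by decide +kernel

theorem τ6_ne : τ6 ^ 2 ≠ 1 := by decide +kernel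

/-- G embeds neither into S₄ nor into A₅. -/
theorem G_not_subgroup_of_S4_or_A5 :
    (∀ φ : G6 →* Equiv.Perm (Fin 4), ¬ Function.Injective φ) ∧
    (∀ ψ : G6 →* alternatingGroup (Fin 5), ¬ Function.Injective ψ) := by
  constructor
  · intro φ hφ
    have hm : h6 ∈ G6 := Subgroup.subset_closure (by simp)
    have h1 : (⟨h6, hm⟩ : G6) ^ 5 = 1 := Subtype.ext h6_pow
    have h2 := perm4_aux (φ ⟨h6, hm⟩) (by rw [← map_pow, h1, map_one])
    have h3 : (⟨h6, hm⟩ : G6) = 1 := hφ (by rw [h2, map_one])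
    exact h6_ne (congrArg Subtype.val h3)
  · intro ψ hψ
    have hm : τ6 ∈ G6 := Subgroup.subset_closure (by simp)
    have h1 : (⟨τ6, hm⟩ : G6) ^ 4 = 1 := Subtype.ext τ6_pow
    have h0 : (ψ ⟨τ6, hm⟩) ^ 4 = 1 := by rw [← map_pow, h1, map_one]
    have h2 := perm5_aux (ψ ⟨τ6, hm⟩ : alternatingGroup (Fin 5)).1
      (Equiv.Perm.mem_alternatingGroup.mp (ψ ⟨τ6, hm⟩).2) (congrArg Subtype.val h0)
    have h4 : (ψ ⟨τ6, hm⟩) ^ 2 = 1 := Subtype.ext h2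
    have h3 : (⟨τ6, hm⟩ : G6) ^ 2 = 1 := hψ (by rw [map_pow, h4, map_one])
    exact τ6_ne (congrArg Subtype.val h3)
end

section
/- The orbit {σ(Q₁) : σ ∈ G} of the quadric cone Q₁ under G, as a family of subsets of ℂ⁶, has exactly 10 distinct elements; equivalently, the stabilizer of Q₁ in G has order 2 and is generated by the involution h∘τ². -/
/-- The action of a coordinate permutation σ on a point p ∈ ℂ⁶: (σ·p)_j = p_{σ⁻¹(j)}. -/
def act (σ : Equiv.Perm (Fin 6)) (p : Fin 6 → ℂ) : Fin 6 → ℂ := fun j => p (σ⁻¹ j)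

/-- The affine cone over the quadric Q₁ ⊂ ℙ³ = {x₀+x₂+x₅ = x₁+x₃+x₄ = 0}. -/
def Q1 (w : ℂ) : Set (Fin 6 → ℂ) :=
  {p | p 0 + p 2 + p 5 = 0 ∧ p 1 + p 3 + p 4 = 0 ∧
    p 0 ^ 2 + p 0 * p 2 + p 2 ^ 2 + w * (p 1 ^ 2 + p 1 * p 3 + p 3 ^ 2) = 0}

/-- The involution generating the stabilizer. -/
def sInv : Equiv.Perm (Fin 6) := h6 * τ6 ^ 2

/-- The twenty elements of G. -/
def gList : List (Equiv.Perm (Fin 6)) :=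
  (List.range 5).flatMap fun i => (List.range 4).map fun j => h6 ^ i * τ6 ^ j

/-- Ten coset representatives. -/
def rList : List (Equiv.Perm (Fin 6)) :=
  (List.range 5).flatMap fun i => (List.range 2).map fun j => h6 ^ i * τ6 ^ j

lemma gList_mul : ∀ x ∈ gList, τ6 * x ∈ gList ∧ τ6⁻¹ * x ∈ gList ∧
    h6 * x ∈ gList ∧ h6⁻¹ * x ∈ gList := by
  rw [← List.all_iff_forall_prop]
  decide +kernel

lemma mem_gList_of_mem {σ : Equiv.Perm (Fin 6)} (h : σ ∈ G6) : σ ∈ gList := by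
  unfold G6 at h
  induction h using Subgroup.closure_induction_left with
  | one => decide +kernel
  | mul_left x hx y _ hy =>
    rcases hx with rfl | rfl
    · exact (gList_mul y hy).1
    · exact (gList_mul y hy).2.2.1
  | inv_mul_cancel x hx y _ hy =>
    rcases hx with rfl | rfl
    · exact (gList_mul y hy).2.1
    · exact (gList_mul y hy).2.2.2

lemma τ6_mem : τ6 ∈ G6 := Subgroup.subset_closure (by simp)

lemma h6_mem : h6 ∈ G6 := Subgroup.subset_closure (by simp)

lemma mem_of_rList {σ : Equiv.Perm (Fin 6)} (h : σ ∈ rList) : σ ∈ G6 := by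
  simp only [rList, List.mem_flatMap, List.mem_map] at h
  obtain ⟨i, _, j, _, rfl⟩ := h
  exact mul_mem (pow_mem h6_mem i) (pow_mem τ6_mem j)

lemma sInv_mem : sInv ∈ G6 := mul_mem h6_mem (pow_mem τ6_mem 2)

lemma gList_rep : ∀ x ∈ gList, ∃ r ∈ rList, r⁻¹ * x = 1 ∨ r⁻¹ * x = sInv := by
  rw [← List.all_iff_forall_prop]
  decide +kernel

lemma rList_inj : ∀ x ∈ rList, ∀ y ∈ rList, (y⁻¹ * x = 1 ∨ y⁻¹ * x = sInv) → x = y := by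
  simp only [← List.all_iff_forall_prop]
  decide +kernel

lemma rList_card : rList.toFinset.card = 10 := by decide +kernel

/-- Elements of G outside ⟨h τ²⟩ move the pair {0, 2}, and all elements fix 5. -/
lemma gList_pair : ∀ x ∈ gList, x⁻¹ 5 = 5 ∧ (x = 1 ∨ x = sInv ∨
    ((x⁻¹ 0 ≠ 0 ∧ x⁻¹ 2 ≠ 0) ∨ (x⁻¹ 0 ≠ 2 ∧ x⁻¹ 2 ≠ 2)) ∧
      x⁻¹ 0 ≠ 5 ∧ x⁻¹ 2 ≠ 5 ∧ x⁻¹ 0 ≠ x⁻¹ 2) := by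
  rw [← List.all_iff_forall_prop]
  decide +kernel

lemma sInv_vals : sInv⁻¹ 0 = 2 ∧ sInv⁻¹ 1 = 4 ∧ sInv⁻¹ 2 = 0 ∧ sInv⁻¹ 3 = 3 ∧
    sInv⁻¹ 4 = 1 ∧ sInv⁻¹ 5 = 5 := by decide +kernel

lemma act_mul (σ ρ : Equiv.Perm (Fin 6)) (p : Fin 6 → ℂ) :
    act (σ * ρ) p = act σ (act ρ p) := by
  funext j; simp [act, mul_inv_rev]

lemma act_one (p : Fin 6 → ℂ) : act 1 p = p := by
  funext j; simp [act]

lemma image_mul (σ ρ : Equiv.Perm (Fin 6)) (S : Set (Fin 6 → ℂ)) :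
    act (σ * ρ) '' S = act σ '' (act ρ '' S) := by
  rw [Set.image_image]; simp only [act_mul]

lemma image_one (S : Set (Fin 6 → ℂ)) : act 1 '' S = S := by
  simp [act_one]

lemma sInv_sq : sInv * sInv = 1 := by decide +kernel

lemma sInv_maps (w : ℂ) (p : Fin 6 → ℂ) (hp : p ∈ Q1 w) : act sInv p ∈ Q1 w := by
  obtain ⟨h1, h2, h3⟩ := hp
  obtain ⟨e0, e1, e2, e3, e4, e5⟩ := sInv_vals
  simp only [Q1, Set.mem_ofPred_eq, act, e0, e1, e2, e3, e4, e5]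
  refine ⟨by linear_combination h1, by linear_combination h2, ?_⟩
  linear_combination h3 + w * (p 4 - p 1) * h2

lemma sInv_image (w : ℂ) : act sInv '' Q1 w = Q1 w := by
  apply Set.Subset.antisymm
  · rintro _ ⟨p, hp, rfl⟩
    exact sInv_maps w p hp
  · intro p hp
    exact ⟨act sInv p, sInv_maps w p hp, by rw [← act_mul, sInv_sq, act_one]⟩

/-- The test point (1, 0, w, 0, 0, w²) of Q₁. -/
lemma stab_sub (w : ℂ) (hw : w ^ 2 + w + 1 = 0) (σ : Equiv.Perm (Fin 6)) (hσ : σ ∈ G6)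
    (h : act σ '' Q1 w = Q1 w) : σ = 1 ∨ σ = sInv := by
  have hw0 : w ≠ 0 := by rintro rfl; norm_num at hw
  have hw1 : w + 1 ≠ 0 := by
    intro h; apply hw0; apply pow_eq_zero_iff (two_ne_zero) |>.1; linear_combination hw - h
  have hw2 : w ^ 2 + 1 ≠ 0 := by intro h; apply hw0; linear_combination hw - h
  obtain ⟨h5, h1 | h1 | ⟨h1, h2, h3, h4⟩⟩ := gList_pair σ (mem_gList_of_mem hσ)
  · exact Or.inl h1
  · exact Or.inr h1
  exfalso
  have hp : (![1, 0, w, 0, 0, w ^ 2] : Fin 6 → ℂ) ∈ Q1 w := by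
    refine ⟨?_, ?_, ?_⟩ <;> simp <;> linear_combination hw
  have hq : act σ ![1, 0, w, 0, 0, w ^ 2] ∈ Q1 w := h ▸ Set.mem_image_of_mem _ hp
  have hs := hq.1
  simp only [act, h5] at hs
  generalize σ⁻¹ 0 = a at *
  generalize σ⁻¹ 2 = b at *
  have hw3 : w + w ^ 2 ≠ 0 := by
    intro h; have : (1 : ℂ) = 0 := by linear_combination hw - h
    exact one_ne_zero this
  have hw4 : 1 + w ^ 2 ≠ 0 := by rwa [add_comm]
  fin_cases a <;> fin_cases b <;> simp_all

/-- The orbit of the quadric cone Q₁ under G consists of exactly 10 distinct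
subsets of ℂ⁶; equivalently, the stabilizer of Q₁ in G is the order-2 subgroup
generated by the involution h∘τ². -/
theorem orbit_of_Q1_has_ten_elements (w : ℂ) (hw : w ^ 2 + w + 1 = 0) :
    ({S : Set (Fin 6 → ℂ) | ∃ σ ∈ G6, S = act σ '' Q1 w}).ncard = 10 ∧
    {σ : Equiv.Perm (Fin 6) | σ ∈ G6 ∧ act σ '' Q1 w = Q1 w} = {1, h6 * τ6 ^ 2} ∧
    orderOf (h6 * τ6 ^ 2) = 2 := by
  have hfix : ∀ σ : Equiv.Perm (Fin 6), σ = 1 ∨ σ = sInv → act σ '' Q1 w = Q1 w := by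
    rintro σ (rfl | rfl)
    · exact image_one _
    · exact sInv_image w
  refine ⟨?_, ?_, ?_⟩
  · have hS : {S : Set (Fin 6 → ℂ) | ∃ σ ∈ G6, S = act σ '' Q1 w} =
        (fun σ => act σ '' Q1 w) '' (rList.toFinset : Set (Equiv.Perm (Fin 6))) := by
      ext S
      constructor
      · rintro ⟨σ, hσ, rfl⟩
        obtain ⟨r, hr, hx⟩ := gList_rep σ (mem_gList_of_mem hσ)
        refine ⟨r, by simpa using hr, ?_⟩
        have : σ = r * (r⁻¹ * σ) := by group
        show act r '' Q1 w = act σ '' Q1 w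
        rw [this, image_mul, hfix _ hx]
      · rintro ⟨r, hr, rfl⟩
        exact ⟨r, mem_of_rList (by simpa using hr), rfl⟩
    rw [hS, Set.InjOn.ncard_image, Set.ncard_coe_finset, rList_card]
    intro x hx y hy hxy
    have hx : x ∈ rList := by simpa using hx
    have hy : y ∈ rList := by simpa using hy
    apply rList_inj x hx y hy
    apply stab_sub w hw _ (mul_mem (inv_mem (mem_of_rList hy)) (mem_of_rList hx))
    have hxy : act x '' Q1 w = act y '' Q1 w := hxy
    rw [image_mul, hxy, ← image_mul, inv_mul_cancel, image_one]
  · ext σ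
    constructor
    · rintro ⟨hσ, h⟩
      exact stab_sub w hw σ hσ h
    · intro h
      refine ⟨?_, hfix σ h⟩
      rcases h with rfl | rfl
      · exact one_mem _
      · exact sInv_mem
  · have : sInv ≠ 1 := by decide +kernel
    exact orderOf_eq_prime (by rw [pow_two]; exact sInv_sq) this
end
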